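/- Let I be a *-homogeneous ideal of D and let A, B be ideals of D that are *-comaximal, i.e., (A + B)* = D. Then: (i) if AB ⊆ I, then A ⊆ I or B ⊆ I; (ii) if moreover B is *-homogeneous, then (AB)*·D_{M(B)} ∩ D = B, where D_{M(B)} is the localization of D at the prime ideal M(B). -/

import Mathlib

open scoped nonZeroDivisors

/-- A star operation on the nonzero fractional ideals of an integral domain `D`
with quotient field `K`: it fixes nonzero principal fractional ideals, commutes with
multiplication by nonzero principal fractional ideals, is extensive, monotone and
idempotent (on nonzero fractional ideals). -/
structure StarOperation (D K : Type*) [CommRing D] [IsDomain D] [Field K]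
    [Algebra D K] [IsFractionRing D K] where
  star : FractionalIdeal D⁰ K → FractionalIdeal D⁰ K
  star_spanSingleton : ∀ x : K, x ≠ 0 →
    star (FractionalIdeal.spanSingleton D⁰ x) = FractionalIdeal.spanSingleton D⁰ x
  star_smul : ∀ (x : K) (I : FractionalIdeal D⁰ K), x ≠ 0 → I ≠ 0 →
    star (FractionalIdeal.spanSingleton D⁰ x * I) = FractionalIdeal.spanSingleton D⁰ x * star I
  le_star : ∀ I : FractionalIdeal D⁰ K, I ≠ 0 → I ≤ star I
  star_mono : ∀ I J : FractionalIdeal D⁰ K, I ≠ 0 → J ≠ 0 → I ≤ J → star I ≤ star J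
  star_idem : ∀ I : FractionalIdeal D⁰ K, I ≠ 0 → star (star I) = star I

namespace StarOperation

variable {D K : Type*} [CommRing D] [IsDomain D] [Field K] [Algebra D K] [IsFractionRing D K]
variable (s : StarOperation D K)

/-- `*` has finite character: for every nonzero fractional ideal `I`, `I^*` is the union
of `J^*` over the nonzero finitely generated fractional subideals `J` of `I`. -/
def FiniteCharacter : Prop :=
  ∀ I : FractionalIdeal D⁰ K, I ≠ 0 → ∀ x ∈ s.star I,
    ∃ J : FractionalIdeal D⁰ K, J ≠ 0 ∧ (J : Submodule D K).FG ∧ J ≤ I ∧ x ∈ s.star J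

/-- A (nonzero) integral ideal `I` of `D` is a `*`-ideal if `I^* = I`. -/
def IsStarIdeal (I : Ideal D) : Prop :=
  I ≠ ⊥ ∧ s.star (I : FractionalIdeal D⁰ K) = (I : FractionalIdeal D⁰ K)

/-- An integral ideal `I` of `D` is a `*`-ideal of finite type if `I = J^*` for some
nonzero finitely generated ideal `J`. -/
def IsFiniteTypeStarIdeal (I : Ideal D) : Prop :=
  ∃ J : Ideal D, J ≠ ⊥ ∧ J.FG ∧
    s.star (J : FractionalIdeal D⁰ K) = (I : FractionalIdeal D⁰ K)

/-- A maximal `*`-ideal: maximal among proper integral `*`-ideals. -/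
def IsMaxStarIdeal (M : Ideal D) : Prop :=
  M ≠ ⊤ ∧ s.IsStarIdeal M ∧ ∀ J : Ideal D, J ≠ ⊤ → s.IsStarIdeal J → M ≤ J → J = M

/-- `I` is `*`-homogeneous: a proper `*`-ideal of finite type such that `(J + J')^* ≠ D`
for every pair `J`, `J'` of proper `*`-ideals of finite type containing `I`. -/
def IsHomog (I : Ideal D) : Prop :=
  I ≠ ⊤ ∧ s.IsStarIdeal I ∧ s.IsFiniteTypeStarIdeal I ∧
    ∀ J J' : Ideal D, J ≠ ⊤ → J' ≠ ⊤ → s.IsStarIdeal J → s.IsStarIdeal J' →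
      s.IsFiniteTypeStarIdeal J → s.IsFiniteTypeStarIdeal J' → I ≤ J → I ≤ J' →
      s.star ((J + J' : Ideal D) : FractionalIdeal D⁰ K) ≠ 1

/-- The set `M(I) = {x ∈ D : (xD + I)^* ≠ D}` attached to an ideal `I`. -/
def MSet (I : Ideal D) : Set D :=
  {x : D | s.star ((Ideal.span {x} + I : Ideal D) : FractionalIdeal D⁰ K) ≠ 1}

/-- `A` and `B` are `*`-comaximal if `(A + B)^* = D`. -/
def StarComaximal (A B : Ideal D) : Prop :=
  s.star ((A + B : Ideal D) : FractionalIdeal D⁰ K) = 1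

/-- An integral ideal `I` is `*`-invertible if `(I · I⁻¹)^* = D`. -/
def StarInvertible (I : Ideal D) : Prop :=
  s.star ((I : FractionalIdeal D⁰ K) * (I : FractionalIdeal D⁰ K)⁻¹) = 1

/-- `D` is a `*`-SH domain: every principal ideal generated by a nonzero nonunit is a
`*`-product of finitely many `*`-homogeneous ideals. -/
def IsSHDomain : Prop :=
  ∀ x : D, x ≠ 0 → ¬IsUnit x →
    ∃ T : Multiset (Ideal D), (∀ J ∈ T, s.IsHomog J) ∧
      s.star ((T.prod : Ideal D) : FractionalIdeal D⁰ K) =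
        ((Ideal.span {x} : Ideal D) : FractionalIdeal D⁰ K)

/-- `D` has finite `*`-character: every nonzero nonunit lies in only finitely many
maximal `*`-ideals. -/
def FiniteStarCharacter : Prop :=
  ∀ x : D, x ≠ 0 → ¬IsUnit x → {P : Ideal D | s.IsMaxStarIdeal P ∧ x ∈ P}.Finite

end StarOperation

/-!
For `I` homogeneous, the elements that are not `*`-comaximal to `I` form an ideal `M(I)`: for
`x, y ∈ M(I)` the ideals `(xD + I)*` and `(yD + I)*` are proper and of finite type, so their sum
has a proper closure. By finite character an ideal is `*`-comaximal to `I` exactly when it is not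
contained in `M(I)`. Hence if `(A + B)* = D`, one of `A`, `B` is `*`-comaximal to `I`, and an ideal
`*`-comaximal to `I` can be cancelled from a product contained in `I`. For the second part,
`A ⊄ M(B)` supplies a denominator `a ∈ A` with `aB ⊆ AB`, and cancelling elements outside `M(B)`
gives the other inclusion.
-/

theorem comap_map_algebraMap_eq_of_mul_mem {R : Type*} [CommRing R] (S : Submonoid R)
    (R' : Type*) [CommRing R'] [Algebra R R'] [IsLocalization S R'] {I J : Ideal R} (hIJ : I ≤ J)
    (hJ : ∀ u ∈ S, ∀ x, u * x ∈ J → x ∈ J) {a : R} (ha : a ∈ S) (haJ : ∀ x ∈ J, a * x ∈ I) :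
    (I.map (algebraMap R R')).comap (algebraMap R R') = J := by
  ext x
  rw [Ideal.mem_comap, IsLocalization.algebraMap_mem_map_algebraMap_iff S]
  exact ⟨fun ⟨u, hu, hux⟩ ↦ hJ u hu x (hIJ hux), fun hx ↦ ⟨a, ha, haJ x hx⟩⟩

namespace StarOperation

variable {D K : Type*} [CommRing D] [IsDomain D] [Field K] [Algebra D K] [IsFractionRing D K]
variable (s : StarOperation D K) {A B I J : Ideal D}

theorem star_one : s.star 1 = 1 := by
  simpa only [FractionalIdeal.spanSingleton_one] using s.star_spanSingleton 1 one_ne_zero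

theorem star_coeIdeal_le_one (hI : I ≠ ⊥) : s.star (I : FractionalIdeal D⁰ K) ≤ 1 :=
  s.star_one ▸ s.star_mono _ 1 (FractionalIdeal.coeIdeal_ne_zero.mpr hI) one_ne_zero
    FractionalIdeal.coeIdeal_le_one

/-- The contraction of `I*` to `D`, which is `I*` itself as an integral ideal when `I ≠ ⊥`; for
`I = ⊥` it depends on the unspecified value of `*` at the zero ideal. -/
def starIdeal (I : Ideal D) : Ideal D :=
  (s.star (I : FractionalIdeal D⁰ K) : Submodule D K).comap (Algebra.linearMap D K)

theorem coe_starIdeal (hI : I ≠ ⊥) : (s.starIdeal I : FractionalIdeal D⁰ K) = s.star I := by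
  ext x
  rw [FractionalIdeal.mem_coeIdeal]
  constructor
  · rintro ⟨y, hy, rfl⟩
    exact hy
  · intro hx
    obtain ⟨y, rfl⟩ := (FractionalIdeal.mem_one_iff D⁰).mp (s.star_coeIdeal_le_one hI hx)
    exact ⟨y, hx, rfl⟩

theorem le_starIdeal (hI : I ≠ ⊥) : I ≤ s.starIdeal I := by
  rw [← FractionalIdeal.coeIdeal_le_coeIdeal K, s.coe_starIdeal hI]
  exact s.le_star _ (FractionalIdeal.coeIdeal_ne_zero.mpr hI)

theorem starIdeal_le_starIdeal_of_le (hI : I ≠ ⊥) (hJ : J ≠ ⊥) (hIJ : I ≤ s.starIdeal J) :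
    s.starIdeal I ≤ s.starIdeal J := by
  have hIJ' : (I : FractionalIdeal D⁰ K) ≤ s.starIdeal J :=
    (FractionalIdeal.coeIdeal_le_coeIdeal K).mpr hIJ
  have hJ' : s.starIdeal J ≠ ⊥ := ne_bot_of_le_ne_bot hI hIJ
  rw [← FractionalIdeal.coeIdeal_le_coeIdeal K]
  calc (s.starIdeal I : FractionalIdeal D⁰ K)
      = s.star I := s.coe_starIdeal hI
    _ ≤ s.star (s.starIdeal J) := s.star_mono _ _ (FractionalIdeal.coeIdeal_ne_zero.mpr hI)
        (FractionalIdeal.coeIdeal_ne_zero.mpr hJ') hIJ'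
    _ = s.starIdeal J := by
        rw [s.coe_starIdeal hJ, s.star_idem _ (FractionalIdeal.coeIdeal_ne_zero.mpr hJ)]

open Classical in
/-- The star operation as a closure operator on integral ideals. Its value at the zero ideal, where
the axioms of a star operation say nothing, is set to zero. -/
noncomputable def idealClosure : ClosureOperator (Ideal D) :=
  .mk₂ (fun I ↦ if I = ⊥ then ⊥ else s.starIdeal I)
    (fun I ↦ by
      split_ifs with hI
      · exact hI.le
      · exact s.le_starIdeal hI)
    (fun I J hIJ ↦ by
      split_ifs at hIJ ⊢ with hI hJ hJ
      · exact le_rfl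
      · exact bot_le
      · exact absurd (le_bot_iff.mp hIJ) hI
      · exact s.starIdeal_le_starIdeal_of_le hI hJ hIJ)

theorem idealClosure_bot : s.idealClosure ⊥ = ⊥ := if_pos rfl

theorem idealClosure_eq_starIdeal (hI : I ≠ ⊥) : s.idealClosure I = s.starIdeal I := if_neg hI

theorem mem_idealClosure (hI : I ≠ ⊥) {x : D} :
    x ∈ s.idealClosure I ↔ algebraMap D K x ∈ s.star (I : FractionalIdeal D⁰ K) := by
  rw [s.idealClosure_eq_starIdeal hI]
  rfl

theorem coe_idealClosure (hI : I ≠ ⊥) :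
    (s.idealClosure I : FractionalIdeal D⁰ K) = s.star I := by
  rw [s.idealClosure_eq_starIdeal hI, s.coe_starIdeal hI]

theorem isStarIdeal_iff : s.IsStarIdeal I ↔ I ≠ ⊥ ∧ s.idealClosure.IsClosed I :=
  and_congr_right fun hI ↦ by
    rw [← s.coe_idealClosure hI, FractionalIdeal.coeIdeal_inj]
    exact s.idealClosure.isClosed_iff.symm

theorem isStarIdeal_idealClosure (hI : I ≠ ⊥) : s.IsStarIdeal (s.idealClosure I) :=
  s.isStarIdeal_iff.mpr ⟨ne_bot_of_le_ne_bot hI (s.idealClosure.le_closure I),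
    s.idealClosure.isClosed_closure I⟩

theorem isFiniteTypeStarIdeal_iff :
    s.IsFiniteTypeStarIdeal I ↔ ∃ J : Ideal D, J ≠ ⊥ ∧ J.FG ∧ s.idealClosure J = I :=
  exists_congr fun _ ↦ and_congr_right fun hJ ↦ and_congr_right fun _ ↦ by
    rw [← s.coe_idealClosure hJ, FractionalIdeal.coeIdeal_inj]

theorem starComaximal_iff (h : A ⊔ B ≠ ⊥) :
    s.StarComaximal A B ↔ s.idealClosure (A ⊔ B) = ⊤ := by
  rw [StarComaximal, Submodule.add_eq_sup, ← s.coe_idealClosure h, FractionalIdeal.coeIdeal_eq_one,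
    Ideal.one_eq_top]

theorem idealClosure_span_singleton_mul (x : D) (I : Ideal D) :
    s.idealClosure (Ideal.span {x} * I) = Ideal.span {x} * s.idealClosure I := by
  rcases eq_or_ne x 0 with rfl | hx
  · simp only [Ideal.span_singleton_zero, Ideal.bot_mul, idealClosure_bot]
  rcases eq_or_ne I ⊥ with rfl | hI
  · simp only [Ideal.mul_bot, idealClosure_bot]
  have hxI : Ideal.span {x} * I ≠ ⊥ := mul_ne_zero (Ideal.span_singleton_eq_bot.not.mpr hx) hI
  have hxK : algebraMap D K x ≠ 0 := (FaithfulSMul.algebraMap_eq_zero_iff D K).not.mpr hx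
  apply FractionalIdeal.coeIdeal_injective (K := K)
  simp only [s.coe_idealClosure hxI, FractionalIdeal.coeIdeal_mul,
    FractionalIdeal.coeIdeal_span_singleton, s.coe_idealClosure hI]
  exact s.star_smul _ _ hxK (FractionalIdeal.coeIdeal_ne_zero.mpr hI)

theorem mul_idealClosure_le (A I : Ideal D) : A * s.idealClosure I ≤ s.idealClosure (A * I) :=
  Ideal.mul_le.mpr fun a ha b hb ↦ by
    have hab : a * b ∈ s.idealClosure (Ideal.span {a} * I) := by
      rw [idealClosure_span_singleton_mul]
      exact Ideal.mul_mem_mul (Ideal.mem_span_singleton_self a) hb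
    exact s.idealClosure.monotone
      (Ideal.mul_mono_left ((Ideal.span_singleton_le_iff_mem A).mpr ha)) hab

variable {s}

theorem FiniteCharacter.exists_fg_mem_idealClosure (hs : s.FiniteCharacter) {x : D}
    (hx : x ∈ s.idealClosure I) : ∃ J : Ideal D, J.FG ∧ J ≤ I ∧ x ∈ s.idealClosure J := by
  rcases eq_or_ne I ⊥ with rfl | hI
  · exact ⟨⊥, Submodule.fg_bot, le_rfl, hx⟩
  obtain ⟨J', hJ', hJfg, hJI, hxJ⟩ :=
    hs _ (FractionalIdeal.coeIdeal_ne_zero.mpr hI) _ ((s.mem_idealClosure hI).mp hx)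
  obtain ⟨J, rfl⟩ := FractionalIdeal.le_one_iff_exists_coeIdeal.mp
    (hJI.trans FractionalIdeal.coeIdeal_le_one)
  exact ⟨J, (FractionalIdeal.coeIdeal_fg D⁰ (IsFractionRing.injective D K) J).mp hJfg,
    (FractionalIdeal.coeIdeal_le_coeIdeal K).mp hJI,
    (s.mem_idealClosure (FractionalIdeal.coeIdeal_ne_zero.mp hJ')).mpr hxJ⟩

theorem IsStarIdeal.isClosed (hI : s.IsStarIdeal I) : s.idealClosure.IsClosed I :=
  (s.isStarIdeal_iff.mp hI).2

theorem IsStarIdeal.starComaximal_iff (hI : s.IsStarIdeal I) :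
    s.StarComaximal A I ↔ s.idealClosure (A ⊔ I) = ⊤ :=
  s.starComaximal_iff (ne_bot_of_le_ne_bot hI.1 le_sup_right)

theorem IsStarIdeal.starComaximal_mono (hI : s.IsStarIdeal I) (hAB : A ≤ B)
    (hA : s.StarComaximal A I) : s.StarComaximal B I := by
  rw [hI.starComaximal_iff] at hA ⊢
  exact top_le_iff.mp (hA ▸ s.idealClosure.monotone (sup_le_sup_right hAB I))

theorem IsStarIdeal.le_of_mul_le (hI : s.IsStarIdeal I) (hA : s.StarComaximal A I)
    (hAB : A * B ≤ I) : B ≤ I := by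
  have hB : B * (A ⊔ I) ≤ I := by
    rw [Ideal.mul_sup, Ideal.mul_comm B A]
    exact sup_le hAB Ideal.mul_le_right
  calc B = B * s.idealClosure (A ⊔ I) := by rw [hI.starComaximal_iff.mp hA, Ideal.mul_top]
    _ ≤ s.idealClosure (B * (A ⊔ I)) := s.mul_idealClosure_le B (A ⊔ I)
    _ ≤ I := s.idealClosure.closure_min hB hI.isClosed

theorem IsFiniteTypeStarIdeal.idealClosure_sup (hI : s.IsFiniteTypeStarIdeal I) (hA : A.FG) :
    s.IsFiniteTypeStarIdeal (s.idealClosure (A ⊔ I)) := by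
  obtain ⟨J, hJ, hJfg, rfl⟩ := s.isFiniteTypeStarIdeal_iff.mp hI
  exact s.isFiniteTypeStarIdeal_iff.mpr ⟨A ⊔ J, ne_bot_of_le_ne_bot hJ le_sup_right,
    Submodule.FG.sup hA hJfg, (s.idealClosure.closure_sup_closure_right A J).symm⟩

namespace IsHomog

theorem isStarIdeal (hI : s.IsHomog I) : s.IsStarIdeal I := hI.2.1

theorem not_starComaximal_sup (hI : s.IsHomog I) (hA : A.FG) (hB : B.FG)
    (hAI : ¬s.StarComaximal A I) (hBI : ¬s.StarComaximal B I) : ¬s.StarComaximal (A ⊔ B) I := by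
  obtain ⟨-, hIs, hIft, hIhom⟩ := hI
  have le_closure (C : Ideal D) : I ≤ s.idealClosure (C ⊔ I) :=
    le_sup_right.trans (s.idealClosure.le_closure _)
  have isStar (C : Ideal D) : s.IsStarIdeal (s.idealClosure (C ⊔ I)) :=
    s.isStarIdeal_idealClosure (ne_bot_of_le_ne_bot hIs.1 le_sup_right)
  have not_comaximal : ¬s.StarComaximal (s.idealClosure (A ⊔ I)) (s.idealClosure (B ⊔ I)) :=
    hIhom _ _ (hIs.starComaximal_iff.not.mp hAI) (hIs.starComaximal_iff.not.mp hBI)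
      (isStar A) (isStar B) (hIft.idealClosure_sup hA) (hIft.idealClosure_sup hB)
      (le_closure A) (le_closure B)
  rwa [(isStar B).starComaximal_iff, s.idealClosure.closure_sup_closure, ← sup_sup_distrib_right,
    ← hIs.starComaximal_iff] at not_comaximal

/-- The set `M(I)` of a homogeneous ideal `I`, as an ideal. It is the unique maximal `*`-ideal
containing `I` when `*` has finite character. -/
def maximalIdeal (hI : s.IsHomog I) : Ideal D where
  carrier := s.MSet I
  zero_mem' := by
    change ¬s.StarComaximal (Ideal.span {0}) I
    rw [hI.isStarIdeal.starComaximal_iff, Ideal.span_singleton_zero, bot_sup_eq,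
      hI.isStarIdeal.isClosed.closure_eq]
    exact hI.1
  add_mem' {x y} hx hy hxy :=
    hI.not_starComaximal_sup (Submodule.fg_span_singleton x) (Submodule.fg_span_singleton y) hx hy
      (hI.isStarIdeal.starComaximal_mono ((Ideal.span_singleton_le_iff_mem _).mpr
        (Submodule.add_mem_sup (Ideal.mem_span_singleton_self x)
          (Ideal.mem_span_singleton_self y))) hxy)
  smul_mem' r x hx hrx :=
    hx (hI.isStarIdeal.starComaximal_mono ((Ideal.span_singleton_le_iff_mem _).mpr
      (Ideal.mul_mem_left _ r (Ideal.mem_span_singleton_self x))) hrx)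

theorem mem_maximalIdeal (hI : s.IsHomog I) {x : D} :
    x ∈ hI.maximalIdeal ↔ ¬s.StarComaximal (Ideal.span {x}) I :=
  Iff.rfl

theorem le_maximalIdeal (hI : s.IsHomog I) : I ≤ hI.maximalIdeal := fun x hx ↦ by
  rw [mem_maximalIdeal, hI.isStarIdeal.starComaximal_iff,
    sup_eq_right.mpr ((Ideal.span_singleton_le_iff_mem I).mpr hx),
    hI.isStarIdeal.isClosed.closure_eq]
  exact hI.1

theorem not_starComaximal_of_fg (hI : s.IsHomog I) (hA : A.FG) (h : A ≤ hI.maximalIdeal) :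
    ¬s.StarComaximal A I := by
  induction A, hA using Submodule.fg_induction with
  | singleton x => exact h (Ideal.mem_span_singleton_self x)
  | sup A B hA hB ihA ihB =>
    exact hI.not_starComaximal_sup hA hB (ihA (le_sup_left.trans h)) (ihB (le_sup_right.trans h))

theorem idealClosure_ne_top_of_le (hI : s.IsHomog I) (hs : s.FiniteCharacter)
    (h : A ≤ hI.maximalIdeal) : s.idealClosure A ≠ ⊤ := by
  intro hA
  obtain ⟨J, hJfg, hJA, hJ⟩ :=
    hs.exists_fg_mem_idealClosure ((Ideal.eq_top_iff_one _).mp hA)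
  refine hI.not_starComaximal_of_fg hJfg (hJA.trans h) (hI.isStarIdeal.starComaximal_iff.mpr ?_)
  exact (Ideal.eq_top_iff_one _).mpr (s.idealClosure.monotone le_sup_left hJ)

theorem starComaximal_iff_not_le (hI : s.IsHomog I) (hs : s.FiniteCharacter) :
    s.StarComaximal A I ↔ ¬A ≤ hI.maximalIdeal := by
  constructor
  · intro hA h
    exact hI.idealClosure_ne_top_of_le hs (sup_le h hI.le_maximalIdeal)
      (hI.isStarIdeal.starComaximal_iff.mp hA)
  · intro h
    obtain ⟨x, hxA, hx⟩ := SetLike.not_le_iff_exists.mp h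
    exact hI.isStarIdeal.starComaximal_mono ((Ideal.span_singleton_le_iff_mem A).mpr hxA)
      (not_not.mp (hI.mem_maximalIdeal.not.mp hx))

theorem starComaximal_or_starComaximal (hI : s.IsHomog I) (hs : s.FiniteCharacter)
    (hAB : s.idealClosure (A ⊔ B) = ⊤) : s.StarComaximal A I ∨ s.StarComaximal B I := by
  rw [hI.starComaximal_iff_not_le hs, hI.starComaximal_iff_not_le hs, ← not_and_or]
  exact fun h ↦ hI.idealClosure_ne_top_of_le hs (sup_le h.1 h.2) hAB

theorem le_or_le_of_mul_le (hI : s.IsHomog I) (hs : s.FiniteCharacter)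
    (hAB : s.StarComaximal A B) (h : A * B ≤ I) : A ≤ I ∨ B ≤ I := by
  rcases eq_or_ne A ⊥ with rfl | hA
  · exact Or.inl bot_le
  have hsup : s.idealClosure (A ⊔ B) = ⊤ :=
    (s.starComaximal_iff (ne_bot_of_le_ne_bot hA le_sup_left)).mp hAB
  rcases hI.starComaximal_or_starComaximal hs hsup with hAI | hBI
  · exact Or.inr (hI.isStarIdeal.le_of_mul_le hAI h)
  · exact Or.inl (hI.isStarIdeal.le_of_mul_le hBI (Ideal.mul_comm A B ▸ h))

theorem mem_of_mul_mem (hI : s.IsHomog I) {u x : D} (hu : u ∉ hI.maximalIdeal)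
    (hux : u * x ∈ I) : x ∈ I := by
  rw [← Ideal.span_singleton_le_iff_mem] at hux ⊢
  rw [← Ideal.span_singleton_mul_span_singleton] at hux
  exact hI.isStarIdeal.le_of_mul_le (not_not.mp (hI.mem_maximalIdeal.not.mp hu)) hux

theorem comap_map_idealClosure_mul (hB : s.IsHomog B) [hB.maximalIdeal.IsPrime]
    (hA : ¬A ≤ hB.maximalIdeal) :
    ((s.idealClosure (A * B)).map
        (algebraMap D (Localization.AtPrime hB.maximalIdeal))).comap
      (algebraMap D (Localization.AtPrime hB.maximalIdeal)) = B := by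
  obtain ⟨a, haA, ha⟩ := SetLike.not_le_iff_exists.mp hA
  refine comap_map_algebraMap_eq_of_mul_mem hB.maximalIdeal.primeCompl _ ?_
    (fun u hu x hux ↦ hB.mem_of_mul_mem hu hux) ha
    (fun x hx ↦ s.idealClosure.le_closure _ (Ideal.mul_mem_mul haA hx))
  exact s.idealClosure.closure_min Ideal.mul_le_right hB.isStarIdeal.isClosed

end IsHomog

end StarOperation

/-- Let `I` be `*`-homogeneous and `A`, `B` be `*`-comaximal ideals. Then:
(i) if `AB ⊆ I` then `A ⊆ I` or `B ⊆ I`; (ii) if moreover `B` is `*`-homogeneous and `M`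
is the (prime) maximal `*`-ideal `M(B)`, then `(AB)^* · D_M ∩ D = B`. -/
theorem homog_comaximal_parts {D K : Type*} [CommRing D] [IsDomain D] [Field K]
    [Algebra D K] [IsFractionRing D K] (s : StarOperation D K) (hs : s.FiniteCharacter)
    (I : Ideal D) (hI : s.IsHomog I) (A B : Ideal D) (hAB : s.StarComaximal A B) :
    (A * B ≤ I → A ≤ I ∨ B ≤ I) ∧
    (s.IsHomog B → ∀ (M : Ideal D) [M.IsPrime], (M : Set D) = s.MSet B →
      ∃ L : Ideal D,
        (L : FractionalIdeal D⁰ K) = s.star ((A * B : Ideal D) : FractionalIdeal D⁰ K) ∧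
        Ideal.comap (algebraMap D (Localization.AtPrime M))
          (Ideal.map (algebraMap D (Localization.AtPrime M)) L) = B) := by
  refine ⟨hI.le_or_le_of_mul_le hs hAB, fun hB M _ hM ↦ ?_⟩
  obtain rfl : M = hB.maximalIdeal := SetLike.coe_injective hM
  have hA : ¬A ≤ hB.maximalIdeal := (hB.starComaximal_iff_not_le hs).mp hAB
  have hA_ne : A ≠ ⊥ := fun h ↦ hA (h ▸ bot_le)
  have hmul : A * B ≠ ⊥ := mul_ne_zero hA_ne hB.isStarIdeal.1
  exact ⟨s.idealClosure (A * B), s.coe_idealClosure hmul, hB.comap_map_idealClosure_mul hA⟩
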